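/- arXiv:1206.6139 — 2 statements merged into one kernel-verified Lean document; each statement's English description precedes it below -/
import Mathlib

section
/- Let m be an odd squarefree positive integer and let A ⊆ (Z/mZ)* be a subset with |A| > (5/8)·φ(m). Then A + A + A = Z/mZ, i.e., every element of Z/mZ can be written as a₁ + a₂ + a₃ with a₁, a₂, a₃ ∈ A. -/
/-!
For densities `x, y, z` call `xy + yz + zx - 5/8 (x + y + z)` their excess; three sets of units
whose densities have positive excess sum to everything. Averages over the units of `R × S` are
averages over `Rˣ` of averages over fibres, so once the problem is posed for `[0, 1]`-valued
functions in place of sets, the Chinese remainder theorem reduces it to such functions on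
`(ℤ/pℤ)ˣ` for primes `p ≥ 7`, and to sets in `(ℤ/15ℤ)ˣ`.

For `p ≥ 7`, sort the values of the three functions decreasingly as `a, b, c : Fin (p - 1) → ℝ`. If
`i + j + k ≥ p - 1` then Cauchy–Davenport represents every residue by units of rank at most
`i, j, k`, so one may assume `excess (a i) (b j) (c k) ≤ 0` for all such triples. Since the excess
is affine in each variable, averaging it over the triples with `i + j + k = 0` in `ℤ/(p - 1)` gives
the excess of the means, and the only term of uncontrolled sign is the one at `(0, 0, 0)`. It is
compensated by nine others: with `m = (p - 1)/2`, `r = m + 1`, `s = -1`, the permutations of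
`(0, m, m)` and of `(m, r, s)`. That compensation is an inequality between the values at `0` and at
`m`, proved from the reverse Cauchy–Schwarz inequality of the form `xy + yz + zx`, which has
signature `(1, 2)`.

Modulo `15` the fibres over `(ℤ/3ℤ)ˣ` have at most four elements, and a finite check on their sizes
finds three fibres to which Cauchy–Davenport modulo `5` applies.
-/

open Finset
open scoped BigOperators

/-- The second elementary symmetric polynomial in three real variables, as a quadratic form of
signature `(1, 2)`. -/
def pairSum (x y z : ℝ) : ℝ := x * y + y * z + z * x

/-- The bilinear form polar to `pairSum`, normalised so that `pairSum` is its diagonal. -/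
noncomputable def pairSumPolar (a b c x y z : ℝ) : ℝ :=
  (a * (y + z) + b * (z + x) + c * (x + y)) / 2

/-- The amount by which three densities exceed the threshold `xy + yz + zx = 5/8 (x + y + z)`,
which the constant triple meets at density `5/8`. -/
noncomputable def excess (x y z : ℝ) : ℝ := pairSum x y z - 5 / 8 * (x + y + z)

section PairSum

variable {a b c x y z : ℝ}

theorem pairSum_le_sq_div_three : pairSum x y z ≤ (x + y + z) ^ 2 / 3 := by
  unfold pairSum
  nlinarith [sq_nonneg (x - y), sq_nonneg (y - z), sq_nonneg (z - x)]

theorem sq_add_sq_add_sq_le_of_pairSum_nonneg (h : 0 ≤ pairSum x y z) :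
    x ^ 2 + y ^ 2 + z ^ 2 ≤ (x + y + z) ^ 2 := by
  unfold pairSum at h
  linarith [show (x + y + z) ^ 2 = x ^ 2 + y ^ 2 + z ^ 2 + 2 * (x * y + y * z + z * x) by ring]

-- The combination `S • (x, y, z) - T • (a, b, c)` has coordinate sum zero, and `pairSum` is
-- negative semidefinite on that plane.
theorem pairSum_mul_pairSum_le_pairSumPolar_sq (h : 0 < pairSum a b c) :
    pairSum a b c * pairSum x y z ≤ pairSumPolar a b c x y z ^ 2 := by
  set S := a + b + c with hS
  set T := x + y + z with hT
  have hS_pos : 0 < S ^ 2 := by linarith [pairSum_le_sq_div_three (x := a) (y := b) (z := c)]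
  have h_plane : pairSum (S * x - T * a) (S * y - T * b) (S * z - T * c) ≤ 0 := by
    refine pairSum_le_sq_div_three.trans_eq ?_
    rw [hS, hT]
    ring
  have h_expand : pairSum (S * x - T * a) (S * y - T * b) (S * z - T * c) =
      S ^ 2 * pairSum x y z - 2 * S * T * pairSumPolar a b c x y z + T ^ 2 * pairSum a b c := by
    unfold pairSum pairSumPolar
    ring
  rw [h_expand] at h_plane
  have h_disc : 0 ≤ S ^ 2 *
      (pairSumPolar a b c x y z ^ 2 - pairSum a b c * pairSum x y z) := by
    nlinarith [sq_nonneg (T * pairSum a b c - S * pairSumPolar a b c x y z),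
      mul_nonneg h.le (sub_nonneg.2 h_plane)]
  linarith [nonneg_of_mul_nonneg_right h_disc hS_pos]

theorem pairSumPolar_nonneg (habc : 0 ≤ pairSum a b c) (hxyz : 0 ≤ pairSum x y z)
    (hS : 0 ≤ a + b + c) (hT : 0 ≤ x + y + z) : 0 ≤ pairSumPolar a b c x y z := by
  have h_cauchy : (a * x + b * y + c * z) ^ 2 ≤
      (a ^ 2 + b ^ 2 + c ^ 2) * (x ^ 2 + y ^ 2 + z ^ 2) := by
    nlinarith [sq_nonneg (a * y - b * x), sq_nonneg (b * z - c * y), sq_nonneg (c * x - a * z)]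
  have h_sq : (a * x + b * y + c * z) ^ 2 ≤ ((a + b + c) * (x + y + z)) ^ 2 := by
    rw [mul_pow]
    refine h_cauchy.trans (mul_le_mul (sq_add_sq_add_sq_le_of_pairSum_nonneg habc)
      (sq_add_sq_add_sq_le_of_pairSum_nonneg hxyz) (by positivity) (by positivity))
  have h_inner := (abs_le_of_sq_le_sq' h_sq (by positivity)).2
  unfold pairSumPolar
  linarith

theorem pairSum_add_six_mul_pairSum_le (hS : 0 ≤ a + b + c) (hS' : a + b + c ≤ 33 / 5)
    (hT : 0 ≤ x + y + z) (hxyz : pairSum x y z ≤ 3)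
    (hpolar : 2 * pairSumPolar a b c x y z + pairSum x y z ≤ 9) :
    pairSum a b c + 6 * pairSum x y z ≤ 21 := by
  rcases le_or_gt (pairSum x y z) (27 / 25) with hsmall | hlarge
  · nlinarith [pairSum_le_sq_div_three (x := a) (y := b) (z := c)]
  rcases le_or_gt (pairSum a b c) 0 with hneg | hpos
  · linarith
  have h_cs := pairSum_mul_pairSum_le_pairSumPolar_sq (x := x) (y := y) (z := z) hpos
  have h_polar_nonneg := pairSumPolar_nonneg hpos.le (by linarith) hS hT
  set t := pairSum x y z
  have h_disc : 4 * (pairSum a b c * t) ≤ (9 - t) ^ 2 := by nlinarith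
  have h_prod : t * (pairSum a b c + 6 * t - 21) ≤ 0 := by
    linarith [mul_nonneg (show 0 ≤ 25 * t - 27 by linarith) (show 0 ≤ 3 - t by linarith)]
  nlinarith

end PairSum

section Excess

variable {a b c x y z : ℝ}

theorem excess_comm (x y z : ℝ) : excess x y z = excess y x z := by
  unfold excess pairSum
  ring

theorem excess_rotate (x y z : ℝ) : excess x y z = excess y z x := by
  unfold excess pairSum
  ring

-- `x = y = z = 5 / 16` is the critical point of the excess.
theorem excess_eq_pairSum_rescale (x y z : ℝ) : excess x y z =
    25 / 256 * (pairSum (16 / 5 * x - 1) (16 / 5 * y - 1) (16 / 5 * z - 1) - 3) := by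
  unfold excess pairSum
  ring

theorem five_eighths_lt_add_of_excess_pos (hx : 0 ≤ x) (hy : 0 ≤ y) (hz : 0 ≤ z)
    (h : 0 < excess x y z) : 5 / 8 < y + z := by
  unfold excess pairSum at h
  by_contra! hyz
  nlinarith [mul_nonneg hx (sub_nonneg.2 hyz), mul_nonneg hy hz,
    mul_nonneg (add_nonneg hy hz) (sub_nonneg.2 hyz)]

theorem excess_le_excess_left {x' : ℝ} (hyz : 5 / 8 ≤ y + z) (h : x ≤ x') :
    excess x y z ≤ excess x' y z := by
  unfold excess pairSum
  nlinarith [mul_nonneg (sub_nonneg.2 h) (sub_nonneg.2 hyz)]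

theorem excess_le_excess_of_pos {x' y' z' : ℝ} (hx : 0 ≤ x) (hy : 0 ≤ y) (hz : 0 ≤ z)
    (h : 0 < excess x y z) (hxx' : x ≤ x') (hyy' : y ≤ y') (hzz' : z ≤ z') :
    excess x y z ≤ excess x' y' z' := by
  have hyz := five_eighths_lt_add_of_excess_pos hx hy hz h
  have hzx := five_eighths_lt_add_of_excess_pos hy hz hx (by rwa [← excess_rotate])
  have hxy := five_eighths_lt_add_of_excess_pos hz hx hy (by rwa [excess_rotate])
  calc excess x y z ≤ excess x' y z := excess_le_excess_left hyz.le hxx'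
    _ = excess y z x' := excess_rotate ..
    _ ≤ excess y' z x' := excess_le_excess_left (by linarith) hyy'
    _ = excess z x' y' := excess_rotate ..
    _ ≤ excess z' x' y' := excess_le_excess_left (by linarith) hzz'
    _ = excess x' y' z' := excess_rotate ..

theorem eq_one_of_excess_pos (hx : x ∈ ({0, 1} : Set ℝ)) (hy : y ∈ ({0, 1} : Set ℝ))
    (hz : z ∈ ({0, 1} : Set ℝ)) (h : 0 < excess x y z) : x = 1 ∧ y = 1 ∧ z = 1 := by
  unfold excess pairSum at h
  rcases hx with rfl | rfl <;> rcases hy with rfl | rfl <;> rcases hz with rfl | rfl <;>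
    norm_num at h
  simp

-- `-5 / 8 * x` is `excess x 0 0`: on a box the excess is bounded by its values at two corners.
theorem excess_le_max_of_le {r s : ℝ} (hr : 0 ≤ r) (hs : 0 ≤ s) (hry : r ≤ y) (hsz : s ≤ z) :
    excess x r s ≤ max (excess x y z) (-5 / 8 * x) := by
  rcases le_or_gt (excess x r s) (-5 / 8 * x) with h | h
  · exact h.trans (le_max_right _ _)
  refine le_max_of_le_left ?_
  unfold excess pairSum at *
  have hxr : 0 ≤ x + r - 5 / 8 := by
    by_contra! hc
    nlinarith [mul_nonneg hs (sub_nonneg.2 hc.le), mul_nonneg hr hr, mul_nonneg hr hs,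
      mul_nonneg hr (sub_nonneg.2 hc.le)]
  have hxs : 0 ≤ x + s - 5 / 8 := by
    by_contra! hc
    nlinarith [mul_nonneg hr (sub_nonneg.2 hc.le), mul_nonneg hs hs, mul_nonneg hr hs,
      mul_nonneg hs (sub_nonneg.2 hc.le)]
  nlinarith [mul_nonneg (sub_nonneg.2 hry) hxs, mul_nonneg (sub_nonneg.2 hsz) hxr,
    mul_nonneg (sub_nonneg.2 hry) (sub_nonneg.2 hsz)]

theorem excess_corners_eq_four_mul_excess_midpoint (a b c x y z : ℝ) :
    excess a b c + excess a y z + excess x b z + excess x y c =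
      4 * excess ((a + x) / 2) ((b + y) / 2) ((c + z) / 2) := by
  unfold excess pairSum
  ring

theorem excess_add_six_mul_excess_nonpos (ha : a ≤ 1) (hb : b ≤ 1) (hc : c ≤ 1)
    (hS : 15 / 16 ≤ a + b + c) (hT : 15 / 16 ≤ x + y + z) (hxyz : excess x y z ≤ 0)
    (hayz : excess a y z ≤ 0) (hxbz : excess x b z ≤ 0) (hxyc : excess x y c ≤ 0) :
    excess a b c + 6 * excess x y z ≤ 0 := by
  simp only [excess_eq_pairSum_rescale] at *
  have h_polar : 2 * pairSumPolar (16 / 5 * a - 1) (16 / 5 * b - 1) (16 / 5 * c - 1)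
      (16 / 5 * x - 1) (16 / 5 * y - 1) (16 / 5 * z - 1) +
      pairSum (16 / 5 * x - 1) (16 / 5 * y - 1) (16 / 5 * z - 1) ≤ 9 := by
    unfold pairSumPolar pairSum at *
    linarith
  linarith [pairSum_add_six_mul_pairSum_le (by linarith) (by linarith) (by linarith)
    (by linarith) h_polar]

theorem five_fourths_lt_add_of_lt_excess (hx : 0 ≤ x) (hy : 0 ≤ y) (hz : 0 ≤ z)
    (hx' : -5 / 8 * x < excess x y z) (hy' : -5 / 8 * y < excess x y z)
    (hz' : -5 / 8 * z < excess x y z) : 5 / 4 < x + y + z := by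
  have h_le := pairSum_le_sq_div_three (x := x) (y := y) (z := z)
  have h_lt : 5 / 4 * (x + y + z) < (x + y + z) ^ 2 := by
    unfold excess at *
    linarith
  nlinarith

section Midpoint

variable (ha : a ≤ 1) (hb : b ≤ 1) (hc : c ≤ 1) (hx : 0 ≤ x) (hy : 0 ≤ y) (hz : 0 ≤ z)
  (hxa : x ≤ a) (hyb : y ≤ b) (hzc : z ≤ c)
  (hmid : 0 < excess ((a + x) / 2) ((b + y) / 2) ((c + z) / 2))
include hb hc hx hy hz hxa hyb hzc hmid

theorem excess_midpoint_le_excess_midpoint_one :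
    excess ((a + x) / 2) ((b + y) / 2) ((c + z) / 2) ≤
      excess ((a + x) / 2) ((1 + y) / 2) ((1 + z) / 2) :=
  excess_le_excess_of_pos (by linarith) (by linarith) (by linarith) hmid le_rfl
    (by linarith) (by linarith)

include ha

theorem four_mul_excess_midpoint_add_linear_add_two_excess_nonpos (hayz : excess a y z ≤ 0)
    (hx' : excess x y z ≤ -5 / 8 * x) :
    4 * excess ((a + x) / 2) ((b + y) / 2) ((c + z) / 2) +
      2 * (-5 / 8 * x + excess x y z + excess x y z) ≤ 0 := by
  have h_one := excess_midpoint_le_excess_midpoint_one hb hc hx hy hz hxa hyb hzc hmid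
  unfold excess pairSum at *
  nlinarith [mul_nonneg (sub_nonneg.2 ha) (add_nonneg hy hz), sq_nonneg (y - z)]

theorem four_mul_excess_midpoint_add_linear_add_excess_nonpos (hayz : excess a y z ≤ 0)
    (hx' : excess x y z ≤ -5 / 8 * x) (hy' : excess x y z ≤ -5 / 8 * y) :
    4 * excess ((a + x) / 2) ((b + y) / 2) ((c + z) / 2) +
      2 * (-5 / 8 * x + -5 / 8 * y + excess x y z) ≤ 0 := by
  have h_one := excess_midpoint_le_excess_midpoint_one hb hc hx hy hz hxa hyb hzc hmid
  unfold excess pairSum at *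
  nlinarith [mul_nonneg (sub_nonneg.2 ha) hy, mul_nonneg (sub_nonneg.2 ha) hz]

theorem four_mul_excess_midpoint_add_linear_nonpos (hx' : excess x y z ≤ -5 / 8 * x) :
    4 * excess ((a + x) / 2) ((b + y) / 2) ((c + z) / 2) +
      2 * (-5 / 8 * x + -5 / 8 * y + -5 / 8 * z) ≤ 0 := by
  have h_one : excess ((a + x) / 2) ((b + y) / 2) ((c + z) / 2) ≤
      excess ((1 + x) / 2) ((1 + y) / 2) ((1 + z) / 2) :=
    excess_le_excess_of_pos (by linarith) (by linarith) (by linarith) hmid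
      (by linarith) (by linarith) (by linarith)
  unfold excess pairSum at *
  linarith

end Midpoint

section Corners

variable (ha : a ≤ 1) (hb : b ≤ 1) (hc : c ≤ 1) (hx : 0 ≤ x) (hy : 0 ≤ y) (hz : 0 ≤ z)
  (hxa : x ≤ a) (hyb : y ≤ b) (hzc : z ≤ c)
  (hayz : excess a y z ≤ 0) (hxbz : excess x b z ≤ 0) (hxyc : excess x y c ≤ 0)
include ha hb hc hx hy hz hxa hyb hzc hayz hxbz hxyc

theorem excess_corners_add_max_nonpos_of_le_of_le (hxy : x ≤ y) (hyz : y ≤ z) {q : ℝ}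
    (hq : excess x y z = q) :
    excess a b c + excess a y z + excess x b z + excess x y c +
      2 * (max q (-5 / 8 * x) + max q (-5 / 8 * y) + max q (-5 / 8 * z)) ≤ 0 := by
  subst hq
  have h_base : excess x y z ≤ 0 := by
    by_contra! h
    linarith [excess_le_excess_of_pos hx hy hz h hxa le_rfl le_rfl]
  rw [excess_corners_eq_four_mul_excess_midpoint]
  rcases le_or_gt (excess ((a + x) / 2) ((b + y) / 2) ((c + z) / 2)) 0 with hmid | hmid
  · linarith [max_le h_base (show -5 / 8 * x ≤ 0 by linarith),
      max_le h_base (show -5 / 8 * y ≤ 0 by linarith),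
      max_le h_base (show -5 / 8 * z ≤ 0 by linarith)]
  rcases le_or_gt (excess x y z) (-5 / 8 * z) with hz' | hz'
  · rw [max_eq_right (by linarith), max_eq_right (by linarith), max_eq_right hz']
    exact four_mul_excess_midpoint_add_linear_nonpos ha hb hc hx hy hz hxa hyb hzc hmid
      (by linarith)
  rcases le_or_gt (excess x y z) (-5 / 8 * y) with hy' | hy'
  · rw [max_eq_right (by linarith), max_eq_right hy', max_eq_left hz'.le]
    exact four_mul_excess_midpoint_add_linear_add_excess_nonpos ha hb hc hx hy hz hxa hyb hzc
      hmid hayz (by linarith) hy'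
  rcases le_or_gt (excess x y z) (-5 / 8 * x) with hx' | hx'
  · rw [max_eq_right hx', max_eq_left hy'.le, max_eq_left hz'.le]
    exact four_mul_excess_midpoint_add_linear_add_two_excess_nonpos ha hb hc hx hy hz hxa hyb hzc
      hmid hayz hx'
  · rw [max_eq_left hx'.le, max_eq_left hy'.le, max_eq_left hz'.le,
      ← excess_corners_eq_four_mul_excess_midpoint]
    have h_sum := five_fourths_lt_add_of_lt_excess hx hy hz hx' hy' hz'
    linarith [excess_add_six_mul_excess_nonpos ha hb hc (by linarith) (by linarith) h_base
      hayz hxbz hxyc]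

theorem excess_corners_add_max_nonpos :
    excess a b c + excess a y z + excess x b z + excess x y c +
      2 * (max (excess x y z) (-5 / 8 * x) + max (excess x y z) (-5 / 8 * y) +
        max (excess x y z) (-5 / 8 * z)) ≤ 0 := by
  -- With `q` opaque the maxima are atoms for `linarith`, whichever order sorts `x, y, z`.
  obtain ⟨q, hq⟩ : ∃ q, excess x y z = q := ⟨_, rfl⟩
  rw [hq]
  unfold excess pairSum at *
  have sorted {a b c x y z : ℝ} := @excess_corners_add_max_nonpos_of_le_of_le a b c x y z
  unfold excess pairSum at sorted
  rcases le_total x y with hxy | hxy <;> rcases le_total y z with hyz | hyz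
  · linarith [sorted ha hb hc hx hy hz hxa hyb hzc hayz hxbz hxyc hxy hyz hq]
  · rcases le_total x z with hxz | hxz
    · linarith [sorted ha hc hb hx hz hy hxa hzc hyb (by linarith) (by linarith)
        (by linarith) hxz hyz (q := q) (by linarith)]
    · linarith [sorted hc ha hb hz hx hy hzc hxa hyb (by linarith) (by linarith)
        (by linarith) hxz hxy (q := q) (by linarith)]
  · rcases le_total x z with hxz | hxz
    · linarith [sorted hb ha hc hy hx hz hyb hxa hzc (by linarith) (by linarith)
        (by linarith) hxy hxz (q := q) (by linarith)]
    · linarith [sorted hb hc ha hy hz hx hyb hzc hxa (by linarith) (by linarith)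
        (by linarith) hyz hxz (q := q) (by linarith)]
  · linarith [sorted hc hb ha hz hy hx hzc hyb hxa (by linarith) (by linarith)
      (by linarith) hyz hxy (q := q) (by linarith)]

end Corners

theorem sum_excess_permutations_le_max {x₁ x₂ x₃ r₁ r₂ r₃ s₁ s₂ s₃ : ℝ}
    (hr₁ : 0 ≤ r₁) (hr₂ : 0 ≤ r₂) (hr₃ : 0 ≤ r₃) (hs₁ : 0 ≤ s₁) (hs₂ : 0 ≤ s₂) (hs₃ : 0 ≤ s₃)
    (hrx₁ : r₁ ≤ x₁) (hrx₂ : r₂ ≤ x₂) (hrx₃ : r₃ ≤ x₃)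
    (hsx₁ : s₁ ≤ x₁) (hsx₂ : s₂ ≤ x₂) (hsx₃ : s₃ ≤ x₃) :
    excess x₁ r₂ s₃ + excess x₁ s₂ r₃ + excess r₁ x₂ s₃ + excess s₁ x₂ r₃ +
        excess r₁ s₂ x₃ + excess s₁ r₂ x₃ ≤
      2 * (max (excess x₁ x₂ x₃) (-5 / 8 * x₁) + max (excess x₁ x₂ x₃) (-5 / 8 * x₂) +
        max (excess x₁ x₂ x₃) (-5 / 8 * x₃)) := by
  have h₁ := excess_le_max_of_le (x := x₁) hr₂ hs₃ hrx₂ hsx₃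
  have h₁' := excess_le_max_of_le (x := x₁) hs₂ hr₃ hsx₂ hrx₃
  have h₂ := excess_le_max_of_le (x := x₂) hr₁ hs₃ hrx₁ hsx₃
  have h₂' := excess_le_max_of_le (x := x₂) hs₁ hr₃ hsx₁ hrx₃
  have h₃ := excess_le_max_of_le (x := x₃) hr₁ hs₂ hrx₁ hsx₂
  have h₃' := excess_le_max_of_le (x := x₃) hs₁ hr₂ hsx₁ hrx₂
  rw [excess_comm x₂, excess_comm x₂] at h₂ h₂'
  rw [excess_rotate x₃, excess_rotate x₃] at h₃ h₃'
  linarith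

end Excess

section Averaging

theorem expect_excess_add_neg {G : Type*} [AddCommGroup G] [Fintype G] (a b c : G → ℝ) :
    𝔼 i, 𝔼 j, excess (a i) (b j) (c (-(i + j))) = excess (𝔼 i, a i) (𝔼 i, b i) (𝔼 i, c i) := by
  have h_left (i : G) : 𝔼 j, c (-(i + j)) = 𝔼 k, c k :=
    Fintype.expect_equiv ((Equiv.addLeft i).trans (Equiv.neg G)) _ _ fun _ ↦ rfl
  have h_right (j : G) : 𝔼 i, c (-(i + j)) = 𝔼 k, c k :=
    Fintype.expect_equiv ((Equiv.addRight j).trans (Equiv.neg G)) _ _ fun _ ↦ rfl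
  have h_ab : 𝔼 i, 𝔼 j, a i * b j = (𝔼 i, a i) * 𝔼 j, b j :=
    (Fintype.expect_mul_expect a b).symm
  have h_bc : 𝔼 i, 𝔼 j, b j * c (-(i + j)) = (𝔼 i, b i) * 𝔼 k, c k := by
    rw [expect_comm, expect_mul]
    simp only [← mul_expect, h_right]
  have h_ca : 𝔼 i, 𝔼 j, c (-(i + j)) * a i = (𝔼 k, c k) * 𝔼 i, a i := by
    rw [mul_expect]
    simp only [← expect_mul, h_left]
  simp only [excess, pairSum, expect_sub_distrib, expect_add_distrib, h_ab, h_bc,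
    h_ca]
  simp only [← mul_expect, expect_add_distrib, h_left, Fintype.expect_const]

theorem sum_le_sum_ten_zero_sum_triples {G : Type*} [AddCommGroup G] [Fintype G]
    {F : G → G → G → ℝ} {h r s : G} (hnodup : [0, h, r, s].Nodup) (hh : h + h = 0)
    (hhrs : h + r + s = 0)
    (hF : ∀ i j k, i + j + k = 0 → (i ≠ 0 ∨ j ≠ 0) → F i j k ≤ 0) :
    ∑ i, ∑ j, F i j (-(i + j)) ≤ F 0 0 0 + F 0 h h + F h 0 h + F h h 0 +
      (F h r s + F h s r + F r h s + F s h r + F r s h + F s r h) := by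
  classical
  let T : Finset (G × G) :=
    {(0, 0), (0, h), (h, 0), (h, h), (h, r), (h, s), (r, h), (s, h), (r, s), (s, r)}
  have h_sub : ∑ t : G × G, F t.1 t.2 (-(t.1 + t.2)) ≤ ∑ t ∈ T, F t.1 t.2 (-(t.1 + t.2)) := by
    rw [← sum_sdiff (subset_univ T)]
    refine add_le_of_nonpos_left (sum_nonpos fun t ht ↦ hF _ _ _ (by abel) ?_)
    by_contra! h_zero
    exact (mem_sdiff.1 ht).2 (by simp [T, Prod.ext_iff, h_zero])
  have hneg_h : -h = h := neg_eq_of_add_eq_zero_left hh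
  have hneg_hr : -(h + r) = s := neg_eq_of_add_eq_zero_right hhrs
  have hneg_hs : -(h + s) = r := neg_eq_of_add_eq_zero_right (by rw [← hhrs]; abel)
  have hneg_rs : -(r + s) = h := neg_eq_of_add_eq_zero_right (by rw [← hhrs]; abel)
  rw [← Fintype.sum_prod_type']
  refine h_sub.trans_eq ?_
  simp only [List.nodup_cons, List.mem_cons, not_or] at hnodup
  simp only [T]
  repeat rw [sum_insert (by simp; grind)]
  simp only [sum_singleton, hneg_h, hneg_hr, hneg_hs, hneg_rs,
    add_comm r h, add_comm s h, add_comm s r, zero_add, add_zero, hh, neg_zero]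
  ring

theorem le_val_add_val_add_val_of_add_eq_zero {n : ℕ} [NeZero n] {i j k : Fin n}
    (hsum : i + j + k = 0) (hne : i ≠ 0 ∨ j ≠ 0) : n ≤ (i : ℕ) + j + k := by
  have h_dvd : n ∣ (i : ℕ) + j + k := by
    have := congrArg Fin.val hsum
    rw [Fin.val_add, Fin.val_add, Nat.mod_add_mod, Fin.val_zero] at this
    exact Nat.dvd_of_mod_eq_zero this
  refine Nat.le_of_dvd ?_ h_dvd
  simp only [ne_eq, Fin.ext_iff, Fin.val_zero] at hne
  omega

theorem exists_half_add_add_eq_zero {d : ℕ} [NeZero (d + d)] (hd : 3 ≤ d) :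
    ∃ m r s : Fin (d + d), m ≤ r ∧ m ≤ s ∧ m + m = 0 ∧ m + r + s = 0 ∧ [0, m, r, s].Nodup := by
  refine ⟨⟨d, by omega⟩, ⟨d + 1, by omega⟩, ⟨d + d - 1, by omega⟩, ?_, ?_, ?_, ?_, ?_⟩
  · exact Fin.mk_le_mk.2 (by omega)
  · exact Fin.mk_le_mk.2 (by omega)
  · simp [Fin.ext_iff, Fin.val_add]
  · simp only [Fin.ext_iff, Fin.val_add, Nat.mod_add_mod, Fin.val_zero]
    rw [show d + (d + 1) + (d + d - 1) = 2 * (d + d) by omega, Nat.mul_mod_left]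
  · simp only [List.nodup_cons, List.mem_cons, List.not_mem_nil, List.nodup_nil, Fin.ext_iff,
      Fin.val_zero, or_false, not_false_eq_true, and_true]
    omega

theorem exists_le_add_add_and_excess_pos_of_antitone {n : ℕ} (hn : Even n) (hn6 : 6 ≤ n)
    {a b c : Fin n → ℝ} (ha : ∀ i, a i ∈ Set.Icc 0 1) (hb : ∀ i, b i ∈ Set.Icc 0 1)
    (hc : ∀ i, c i ∈ Set.Icc 0 1) (ha' : Antitone a) (hb' : Antitone b) (hc' : Antitone c)
    (h : 0 < excess (𝔼 i, a i) (𝔼 i, b i) (𝔼 i, c i)) :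
    ∃ i j k : Fin n, n ≤ (i : ℕ) + j + k ∧ 0 < excess (a i) (b j) (c k) := by
  by_contra! hcon
  obtain ⟨d, rfl⟩ := hn
  have : NeZero (d + d) := ⟨by omega⟩
  refine h.not_ge ?_
  rw [← expect_excess_add_neg]
  simp only [Fintype.expect_eq_sum_div_card, ← sum_div]
  refine div_nonpos_of_nonpos_of_nonneg (div_nonpos_of_nonpos_of_nonneg ?_ (by positivity))
    (by positivity)
  have h_zero_sum (i j k : Fin (d + d)) (hsum : i + j + k = 0) (hne : i ≠ 0 ∨ j ≠ 0) :
      excess (a i) (b j) (c k) ≤ 0 :=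
    hcon i j k (le_val_add_val_add_val_of_add_eq_zero hsum hne)
  obtain ⟨m, r, s, hmr, hms, hmm, hmrs, hnodup⟩ := exists_half_add_add_eq_zero (d := d) (by omega)
  have hm0 : m ≠ 0 := fun hm ↦ by simp [hm] at hnodup
  refine (sum_le_sum_ten_zero_sum_triples (F := fun i j k ↦ excess (a i) (b j) (c k))
    hnodup hmm hmrs h_zero_sum).trans ?_
  have h_corners := excess_corners_add_max_nonpos (ha 0).2 (hb 0).2 (hc 0).2 (ha m).1 (hb m).1
    (hc m).1 (ha' (Fin.zero_le m)) (hb' (Fin.zero_le m)) (hc' (Fin.zero_le m))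
    (h_zero_sum 0 m m (by simpa using hmm) (.inr hm0))
    (h_zero_sum m 0 m (by simpa using hmm) (.inl hm0))
    (h_zero_sum m m 0 (by simpa using hmm) (.inl hm0))
  have h_permutations := sum_excess_permutations_le_max (ha r).1 (hb r).1 (hc r).1 (ha s).1
    (hb s).1 (hc s).1 (ha' hmr) (hb' hmr) (hc' hmr) (ha' hms) (hb' hms) (hc' hms)
  linarith

end Averaging

section CauchyDavenport

/-- Three sizes for which the Cauchy–Davenport theorem makes the sumset of any three sets of these
sizes in `ℤ/pℤ`, with `p` prime, all of `ℤ/pℤ`. -/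
def FillsModulus (p x y z : ℕ) : Prop := 0 < x ∧ 0 < y ∧ 0 < z ∧ p + 2 ≤ x + y + z

instance (p x y z : ℕ) : Decidable (FillsModulus p x y z) :=
  inferInstanceAs (Decidable (0 < x ∧ 0 < y ∧ 0 < z ∧ p + 2 ≤ x + y + z))

open scoped Pointwise in
theorem exists_add_add_eq_of_fillsModulus {p : ℕ} [Fact p.Prime] {A B C : Finset (ZMod p)}
    (h : FillsModulus p #A #B #C) (x : ZMod p) : ∃ a ∈ A, ∃ b ∈ B, ∃ c ∈ C, a + b + c = x := by
  obtain ⟨hA, hB, hC, hABC⟩ := h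
  rw [card_pos] at hA hB
  have h_two := ZMod.cauchy_davenport Fact.out hA hB
  have h_three := ZMod.cauchy_davenport Fact.out (hA.add hB) (card_pos.1 hC)
  have h_univ : A + B + C = univ := by
    refine eq_univ_of_card _ (le_antisymm (card_le_univ _) ?_)
    rw [ZMod.card]
    omega
  have hx : x ∈ A + B + C := h_univ ▸ mem_univ x
  simpa only [mem_add, exists_exists_and_exists_and_eq_and] using hx

theorem exists_units_add_add_eq_of_fillsModulus {p : ℕ} [Fact p.Prime] {A B C : Finset (ZMod p)ˣ}
    (h : FillsModulus p #A #B #C) (x : ZMod p) :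
    ∃ a ∈ A, ∃ b ∈ B, ∃ c ∈ C, (a : ZMod p) + b + c = x := by
  let val : (ZMod p)ˣ ↪ ZMod p := ⟨Units.val, Units.val_injective⟩
  simpa only [mem_map, exists_exists_and_eq_and, val, Function.Embedding.coeFn_mk] using
    exists_add_add_eq_of_fillsModulus (A := A.map val) (B := B.map val) (C := C.map val)
      (by simpa only [card_map] using h) x

theorem exists_le_units_add_add_eq {p n : ℕ} [Fact p.Prime] (e₁ e₂ e₃ : Fin n ↪ (ZMod p)ˣ)
    {i j k : Fin n} (h : p ≤ (i : ℕ) + j + k + 1) (x : ZMod p) :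
    ∃ i' ≤ i, ∃ j' ≤ j, ∃ k' ≤ k, (e₁ i' : ZMod p) + e₂ j' + e₃ k' = x := by
  have h_fills : FillsModulus p #((Iic i).map e₁) #((Iic j).map e₂) #((Iic k).map e₃) := by
    simp only [card_map, Fin.card_Iic, FillsModulus]
    omega
  simpa only [mem_map, mem_Iic, exists_exists_and_eq_and] using
    exists_units_add_add_eq_of_fillsModulus h_fills x

end CauchyDavenport

section Transfer

theorem expect_units_prod {R S : Type*} [Monoid R] [Monoid S] [Fintype Rˣ]
    [Fintype Sˣ] [Fintype (R × S)ˣ] (F : (R × S)ˣ → ℝ) :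
    𝔼 t, F t = 𝔼 u, 𝔼 v, F (MulEquiv.prodUnits.symm (u, v)) := by
  rw [← expect_product', univ_product_univ]
  exact Fintype.expect_equiv MulEquiv.prodUnits.toEquiv _ _ fun t ↦ by simp

/-- Positive excess of the averages of three `V`-valued functions on the units of `R` forces every
element of `R` to be a sum of three units at which the values have positive excess. For
`V = {0, 1}` the functions are indicators of sets of units and the conclusion is that the sets
sum to `R`; `V = [0, 1]` is the version that survives products of rings. -/
def ExcessTransfer (V : Set ℝ) (R : Type*) [CommRing R] [Fintype Rˣ] : Prop :=
  ∀ f g h : Rˣ → ℝ, (∀ u, f u ∈ V) → (∀ u, g u ∈ V) → (∀ u, h u ∈ V) →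
    0 < excess (𝔼 u, f u) (𝔼 u, g u) (𝔼 u, h u) →
    ∀ x : R, ∃ u v w : Rˣ, (u : R) + v + w = x ∧ 0 < excess (f u) (g v) (h w)

namespace ExcessTransfer

variable {R S : Type*} [CommRing R] [CommRing S] [Fintype Rˣ] {V : Set ℝ}

theorem of_ringEquiv [Fintype Sˣ] (e : R ≃+* S) (hR : ExcessTransfer V R) : ExcessTransfer V S := by
  intro f g h hf hg hh hpos x
  let e' : Rˣ ≃* Sˣ := Units.mapEquiv e
  have h_expect (F : Sˣ → ℝ) : 𝔼 u, F (e' u) = 𝔼 v, F v :=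
    Fintype.expect_equiv e'.toEquiv _ _ fun _ ↦ rfl
  obtain ⟨u, v, w, hsum, hexcess⟩ := hR (f ∘ e') (g ∘ e') (h ∘ e') (fun _ ↦ hf _) (fun _ ↦ hg _)
    (fun _ ↦ hh _) (by simpa only [Function.comp_apply, h_expect] using hpos) (e.symm x)
  refine ⟨e' u, e' v, e' w, ?_, hexcess⟩
  rw [← e.apply_symm_apply x, ← hsum, map_add, map_add]
  rfl

theorem of_subsingleton [Subsingleton R] : ExcessTransfer V R := by
  intro f g h _ _ _ hpos x
  have : Subsingleton Rˣ := Units.val_injective.subsingleton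
  have h_expect (F : Rˣ → ℝ) : 𝔼 u, F u = F 1 := by
    simp only [Subsingleton.elim _ (1 : Rˣ), Fintype.expect_const]
  exact ⟨1, 1, 1, Subsingleton.elim _ _, by simpa only [h_expect] using hpos⟩

variable [Fintype (R × S)ˣ]

theorem prod [Fintype Sˣ] (hV : V ⊆ Set.Icc 0 1) (hR : ExcessTransfer (Set.Icc 0 1) R)
    (hS : ExcessTransfer V S) : ExcessTransfer V (R × S) := by
  intro f g h hf hg hh hpos x
  have h_mem {F : (R × S)ˣ → ℝ} (hF : ∀ t, F t ∈ V) (u : Rˣ) :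
      𝔼 v, F (MulEquiv.prodUnits.symm (u, v)) ∈ Set.Icc 0 1 :=
    ⟨expect_nonneg fun _ _ ↦ (hV (hF _)).1, expect_le univ_nonempty fun _ _ ↦ (hV (hF _)).2⟩
  simp only [expect_units_prod] at hpos
  obtain ⟨u₁, u₂, u₃, hu, hu_pos⟩ := hR _ _ _ (h_mem hf) (h_mem hg) (h_mem hh) hpos x.1
  obtain ⟨v₁, v₂, v₃, hv, hv_pos⟩ := hS _ _ _ (fun _ ↦ hf _) (fun _ ↦ hg _) (fun _ ↦ hh _)
    hu_pos x.2
  exact ⟨_, _, _, Prod.ext hu hv, hv_pos⟩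

theorem fst (hRS : ExcessTransfer V (R × S)) : ExcessTransfer V R := by
  intro f g h hf hg hh hpos x
  let _ : Fintype Sˣ := Fintype.ofInjective (fun v ↦ MulEquiv.prodUnits.symm ((1 : Rˣ), v))
    (MulEquiv.prodUnits.symm.injective.comp (Prod.mk_right_injective 1))
  let π : (R × S)ˣ → Rˣ := fun t ↦ (MulEquiv.prodUnits t).1
  have h_expect (F : Rˣ → ℝ) : 𝔼 t, F (π t) = 𝔼 u, F u := by
    simp [expect_units_prod, π]
  obtain ⟨u, v, w, hsum, hexcess⟩ := hRS (f ∘ π) (g ∘ π) (h ∘ π) (fun _ ↦ hf _) (fun _ ↦ hg _)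
    (fun _ ↦ hh _) (by simpa only [Function.comp_apply, h_expect] using hpos) (x, 0)
  exact ⟨π u, π v, π w, congrArg Prod.fst hsum, hexcess⟩

end ExcessTransfer
end Transfer

section PrimeModuli

theorem exists_equiv_fin_antitone {α : Type*} [Fintype α] {n : ℕ} (hn : Fintype.card α = n)
    (f : α → ℝ) : ∃ e : Fin n ≃ α, Antitone (f ∘ e) := by
  let e := (Fintype.equivFinOfCardEq hn).symm
  refine ⟨(Tuple.sort (-f ∘ e)).trans e, fun i j hij ↦ ?_⟩
  exact neg_le_neg_iff.1 (Tuple.monotone_sort (-f ∘ e) hij)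

theorem excessTransfer_zmod_prime {p : ℕ} [Fact p.Prime] (hp : 7 ≤ p) :
    ExcessTransfer (Set.Icc 0 1) (ZMod p) := by
  intro f g h hf hg hh hpos x
  have h_card : Fintype.card (ZMod p)ˣ = p - 1 := ZMod.card_units p
  have h_even : Even (p - 1) := (Fact.out : p.Prime).even_sub_one (by omega)
  have h_expect (e : Fin (p - 1) ≃ (ZMod p)ˣ) (F : (ZMod p)ˣ → ℝ) :
      𝔼 i, F (e i) = 𝔼 u, F u := Fintype.expect_equiv e _ _ fun _ ↦ rfl
  obtain ⟨e₁, he₁⟩ := exists_equiv_fin_antitone h_card f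
  obtain ⟨e₂, he₂⟩ := exists_equiv_fin_antitone h_card g
  obtain ⟨e₃, he₃⟩ := exists_equiv_fin_antitone h_card h
  obtain ⟨i, j, k, hijk, hexcess⟩ := exists_le_add_add_and_excess_pos_of_antitone h_even
    (by omega) (fun _ ↦ hf _) (fun _ ↦ hg _) (fun _ ↦ hh _) he₁ he₂ he₃
    (by simpa only [Function.comp_apply, h_expect] using hpos)
  obtain ⟨i', hi, j', hj, k', hk, hsum⟩ := exists_le_units_add_add_eq e₁.toEmbedding
    e₂.toEmbedding e₃.toEmbedding (i := i) (j := j) (k := k) (by omega) x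
  exact ⟨e₁ i', e₂ j', e₃ k', hsum, hexcess.trans_le <| excess_le_excess_of_pos
    (hf _).1 (hg _).1 (hh _).1 hexcess (he₁ hi) (he₂ hj) (he₃ hk)⟩

theorem seven_le_of_prime_of_coprime_thirty {p : ℕ} (hp : p.Prime) (h : p.Coprime 30) :
    7 ≤ p := by
  by_contra! hlt
  have := hp.two_le
  interval_cases p <;> revert h hp <;> decide

theorem excessTransfer_zmod_of_coprime_thirty {k : ℕ} [hk₀ : NeZero k] (hsf : Squarefree k)
    (hk : k.Coprime 30) : ExcessTransfer (Set.Icc 0 1) (ZMod k) := by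
  revert hk₀
  induction k using induction_on_primes with
  | zero => exact absurd hsf not_squarefree_zero
  | one => intro; exact .of_subsingleton
  | prime_mul p n hp ih =>
    intro
    have : Fact p.Prime := ⟨hp⟩
    have : NeZero n := ⟨right_ne_zero_of_mul hsf.ne_zero⟩
    have hpn : p.Coprime n := Nat.coprime_of_squarefree_mul hsf
    have hp7 := seven_le_of_prime_of_coprime_thirty hp hk.coprime_mul_right
    refine .of_ringEquiv (ZMod.chineseRemainder hpn).symm
      (.prod subset_rfl (excessTransfer_zmod_prime hp7) (ih ?_ hk.coprime_mul_left))
    exact hsf.squarefree_of_dvd (dvd_mul_left n p)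

theorem ExcessTransfer.zmod_of_dvd {V : Set ℝ} {d n : ℕ} [NeZero d] [NeZero n] (hn : Squarefree n)
    (hdn : d ∣ n) (h : ExcessTransfer V (ZMod n)) : ExcessTransfer V (ZMod d) := by
  obtain ⟨l, rfl⟩ := hdn
  have : NeZero l := ⟨right_ne_zero_of_mul hn.ne_zero⟩
  exact .fst (h.of_ringEquiv (ZMod.chineseRemainder (Nat.coprime_of_squarefree_mul hn)))

end PrimeModuli

section Fifteen

-- Since `φ(15) = 8`, the threshold `5/8` on densities is `5` on counts.
theorem fillsModulus_five_or_of_lt : ∀ a a' b b' c c' : Fin 5,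
    5 * ((a + a' : ℕ) + (b + b') + (c + c')) <
      (a + a' : ℕ) * (b + b') + (b + b' : ℕ) * (c + c') + (c + c' : ℕ) * (a + a') →
    (FillsModulus 5 a b c ∨ FillsModulus 5 a' b' c') ∧
      (FillsModulus 5 a' b c ∨ FillsModulus 5 a b' c ∨ FillsModulus 5 a b c') := by
  decide +kernel

theorem sum_units_zmod_three {M : Type*} [AddCommMonoid M] (F : (ZMod 3)ˣ → M) :
    ∑ u, F u = F 1 + F (-1) := by
  rw [show (univ : Finset (ZMod 3)ˣ) = {1, -1} by decide, sum_pair (by decide)]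

theorem exists_units_zmod_three_fillsModulus_five {c₁ c₂ c₃ : (ZMod 3)ˣ → ℕ} (h₁ : ∀ u, c₁ u < 5)
    (h₂ : ∀ u, c₂ u < 5) (h₃ : ∀ u, c₃ u < 5)
    (h : 5 * (∑ u, c₁ u + ∑ u, c₂ u + ∑ u, c₃ u) <
      (∑ u, c₁ u) * ∑ u, c₂ u + (∑ u, c₂ u) * ∑ u, c₃ u + (∑ u, c₃ u) * ∑ u, c₁ u)
    (x : ZMod 3) :
    ∃ u v w : (ZMod 3)ˣ, (u : ZMod 3) + v + w = x ∧ FillsModulus 5 (c₁ u) (c₂ v) (c₃ w) := by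
  simp only [sum_units_zmod_three] at h
  have key (s : (ZMod 3)ˣ) (hs : 5 * ((c₁ s + c₁ (-s)) + (c₂ s + c₂ (-s)) + (c₃ s + c₃ (-s))) <
      (c₁ s + c₁ (-s)) * (c₂ s + c₂ (-s)) + (c₂ s + c₂ (-s)) * (c₃ s + c₃ (-s)) +
        (c₃ s + c₃ (-s)) * (c₁ s + c₁ (-s))) :=
    fillsModulus_five_or_of_lt ⟨_, h₁ s⟩ ⟨_, h₁ (-s)⟩ ⟨_, h₂ s⟩ ⟨_, h₂ (-s)⟩ ⟨_, h₃ s⟩ ⟨_, h₃ (-s)⟩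
      hs
  obtain ⟨h_zero, h_one⟩ := key 1 h
  obtain ⟨-, h_two⟩ := key (-1) (by simpa only [neg_neg, add_comm] using h)
  obtain rfl | rfl | rfl := (by decide : ∀ y : ZMod 3, y = 0 ∨ y = 1 ∨ y = 2) x
  · rcases h_zero with h | h <;> exact ⟨_, _, _, by decide, h⟩
  · rcases h_one with h | h | h <;> exact ⟨_, _, _, by decide, h⟩
  · rcases h_two with h | h | h <;> exact ⟨_, _, _, by decide, h⟩

theorem sum_eq_card_filter_eq_one {α : Type*} [Fintype α] {F : α → ℝ}
    (hF : ∀ a, F a ∈ ({0, 1} : Set ℝ)) :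
    ∑ a, F a = #{a | F a = 1} := by
  rw [← sum_boole]
  refine sum_congr rfl fun a _ ↦ ?_
  rcases hF a with h | (h : F a = 1) <;> simp [h]

theorem expect_units_three_five {F : (ZMod 3 × ZMod 5)ˣ → ℝ} (hF : ∀ t, F t ∈ ({0, 1} : Set ℝ)) :
    𝔼 t, F t =
      ((∑ u, #{v | F (MulEquiv.prodUnits.symm (u, v)) = 1} : ℕ) : ℝ) / 8 := by
  have h_three : Fintype.card (ZMod 3)ˣ = 2 := by decide
  have h_five : Fintype.card (ZMod 5)ˣ = 4 := by decide
  rw [expect_units_prod]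
  simp only [Fintype.expect_eq_sum_div_card, h_three, h_five,
    sum_eq_card_filter_eq_one fun _ ↦ hF _, ← sum_div]
  push_cast
  ring

theorem excessTransfer_zmod_three_prod_zmod_five :
    ExcessTransfer {0, 1} (ZMod 3 × ZMod 5) := by
  intro f g h hf hg hh hpos x
  let fiber (F : (ZMod 3 × ZMod 5)ˣ → ℝ) (u : (ZMod 3)ˣ) : Finset (ZMod 5)ˣ :=
    {v | F (MulEquiv.prodUnits.symm (u, v)) = 1}
  have h_lt (F : (ZMod 3 × ZMod 5)ˣ → ℝ) (u : (ZMod 3)ˣ) : #(fiber F u) < 5 :=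
    Nat.lt_succ_of_le (card_le_univ _)
  have h_pairs : 5 * (∑ u, #(fiber f u) + ∑ u, #(fiber g u) + ∑ u, #(fiber h u)) <
      (∑ u, #(fiber f u)) * ∑ u, #(fiber g u) + (∑ u, #(fiber g u)) * ∑ u, #(fiber h u) +
        (∑ u, #(fiber h u)) * ∑ u, #(fiber f u) := by
    rw [expect_units_three_five hf, expect_units_three_five hg, expect_units_three_five hh] at hpos
    unfold excess pairSum at hpos
    rify
    push_cast at hpos
    linarith
  obtain ⟨u₁, u₂, u₃, hu, h_fills⟩ := exists_units_zmod_three_fillsModulus_five (h_lt f) (h_lt g)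
    (h_lt h) h_pairs x.1
  have : Fact (Nat.Prime 5) := ⟨Nat.prime_five⟩
  obtain ⟨v₁, hv₁, v₂, hv₂, v₃, hv₃, hv⟩ := exists_units_add_add_eq_of_fillsModulus h_fills x.2
  refine ⟨MulEquiv.prodUnits.symm (u₁, v₁), MulEquiv.prodUnits.symm (u₂, v₂),
    MulEquiv.prodUnits.symm (u₃, v₃), Prod.ext hu hv, ?_⟩
  rw [(mem_filter.1 hv₁).2, (mem_filter.1 hv₂).2, (mem_filter.1 hv₃).2]
  norm_num [excess, pairSum]

theorem excessTransfer_zmod_fifteen : ExcessTransfer {0, 1} (ZMod 15) :=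
  .of_ringEquiv (ZMod.chineseRemainder (m := 3) (n := 5) (by decide)).symm
    excessTransfer_zmod_three_prod_zmod_five

theorem excessTransfer_zmod_of_odd_of_squarefree {m : ℕ} [NeZero m] (hodd : Odd m)
    (hsf : Squarefree m) : ExcessTransfer {0, 1} (ZMod m) := by
  obtain ⟨k, hk⟩ := Nat.gcd_dvd_left m 15
  have : NeZero k := ⟨fun h ↦ hsf.ne_zero (by rw [hk, h, mul_zero])⟩
  have hk_dvd : k ∣ m := ⟨_, hk.trans (mul_comm _ _)⟩
  have hk15 : k.Coprime 15 := by
    have := Nat.coprime_div_gcd_of_squarefree hsf (n := 15) (by norm_num)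
    rwa [Nat.div_eq_of_eq_mul_right (Nat.gcd_pos_of_pos_left 15 (NeZero.pos m)) hk] at this
  have hk30 : k.Coprime 30 :=
    hk15.mul_right (hodd.of_dvd_nat hk_dvd).coprime_two_right
  have : NeZero (m.gcd 15) := ⟨Nat.gcd_ne_zero_right (by norm_num)⟩
  have h15 : Squarefree 15 := by decide +kernel
  have h_gcd : ExcessTransfer {0, 1} (ZMod (m.gcd 15)) :=
    excessTransfer_zmod_fifteen.zmod_of_dvd h15 (Nat.gcd_dvd_right m 15)
  have h_prod : ExcessTransfer {0, 1} (ZMod k × ZMod (m.gcd 15)) :=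
    (excessTransfer_zmod_of_coprime_thirty (hsf.squarefree_of_dvd hk_dvd) hk30).prod
      (by simp [Set.insert_subset_iff]) h_gcd
  have hco : k.Coprime (m.gcd 15) := hk15.coprime_dvd_right (Nat.gcd_dvd_right m 15)
  exact h_prod.of_ringEquiv <| (ZMod.chineseRemainder hco).symm.trans <|
    ZMod.ringEquivCongr (by rw [mul_comm, ← hk])

end Fifteen

theorem expect_indicator_units {M : Type*} [Monoid M] [Fintype Mˣ] {A : Set M}
    (hA : ∀ a ∈ A, IsUnit a) :
    𝔼 u : Mˣ, A.indicator (1 : M → ℝ) u = A.ncard / Fintype.card Mˣ := by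
  classical
  have h_ncard : A.ncard = #{u : Mˣ | (u : M) ∈ A} := by
    rw [← Set.ncard_coe_finset, coe_filter_univ,
      ← Set.ncard_image_of_injective _ Units.val_injective]
    exact congrArg Set.ncard (Set.image_preimage_eq_of_subset hA).symm
  simp only [Fintype.expect_eq_sum_div_card, Set.indicator_apply, Pi.one_apply, sum_boole, h_ncard]

theorem stmt5_general {m : ℕ} (hodd : Odd m) (hsf : Squarefree m) {A B C : Set (ZMod m)}
    (hA : ∀ a ∈ A, IsUnit a) (hB : ∀ b ∈ B, IsUnit b) (hC : ∀ c ∈ C, IsUnit c)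
    (hcard : 5 / 8 * (m.totient : ℝ) * (A.ncard + B.ncard + C.ncard) <
      A.ncard * B.ncard + B.ncard * C.ncard + C.ncard * A.ncard) (x : ZMod m) :
    ∃ a ∈ A, ∃ b ∈ B, ∃ c ∈ C, x = a + b + c := by
  have : NeZero m := ⟨hsf.ne_zero⟩
  have h_totient : 0 < (m.totient : ℝ) := mod_cast Nat.totient_pos.2 (NeZero.pos m)
  have h_values (D : Set (ZMod m)) (u : (ZMod m)ˣ) :
      D.indicator (1 : ZMod m → ℝ) u ∈ ({0, 1} : Set ℝ) := by
    by_cases hu : (u : ZMod m) ∈ D <;> simp [hu]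
  have h_mem {D : Set (ZMod m)} {u : (ZMod m)ˣ} (h : D.indicator (1 : ZMod m → ℝ) u = 1) :
      (u : ZMod m) ∈ D := Set.mem_of_indicator_ne_zero (by rw [h]; exact one_ne_zero)
  have h_pos : 0 < excess (𝔼 u : (ZMod m)ˣ, A.indicator 1 (u : ZMod m))
      (𝔼 u : (ZMod m)ˣ, B.indicator 1 (u : ZMod m))
      (𝔼 u : (ZMod m)ˣ, C.indicator 1 (u : ZMod m)) := by
    rw [expect_indicator_units hA, expect_indicator_units hB, expect_indicator_units hC,
      ZMod.card_units_eq_totient, excess, pairSum]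
    field_simp
    linarith
  obtain ⟨u, v, w, hsum, hexcess⟩ := excessTransfer_zmod_of_odd_of_squarefree hodd hsf _ _ _
    (h_values A) (h_values B) (h_values C) h_pos x
  obtain ⟨hu, hv, hw⟩ := eq_one_of_excess_pos (h_values A u) (h_values B v) (h_values C w) hexcess
  exact ⟨u, h_mem hu, v, h_mem hv, w, h_mem hw, hsum.symm⟩

/-- Corollary: if `m` is an odd squarefree positive integer and `A ⊆ (ℤ/mℤ)*` has
`|A| > (5/8)φ(m)`, then `A + A + A = ℤ/mℤ`. -/
theorem stmt5 (m : ℕ) [NeZero m] (hodd : Odd m) (hsf : Squarefree m)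
    (A : Set (ZMod m)) (hA : ∀ a ∈ A, IsUnit a)
    (hcard : (A.ncard : ℝ) > 5 / 8 * (Nat.totient m : ℝ)) :
    ∀ x : ZMod m, ∃ a₁ ∈ A, ∃ a₂ ∈ A, ∃ a₃ ∈ A, x = a₁ + a₂ + a₃ :=
  stmt5_general hodd hsf hA hA hA (by nlinarith [(m.totient.cast_nonneg : 0 ≤ (m.totient : ℝ))])
end

section
/- Let m be an odd squarefree positive integer divisible by 3, and let f : (Z/mZ)* → (0,1] be a function. For i = 1, 2 let αᵢ be the average of f over those units r ∈ (Z/mZ)* with r ≡ i (mod 3). Suppose 2α₁ + α₂ > 3/2 and 2α₂ + α₁ > 3/2. Then for every x ∈ Z/mZ there exist units a₁, a₂, a₃ ∈ (Z/mZ)* with x = a₁ + a₂ + a₃ such that f(a₁) + f(a₂) + f(a₃) > 3/2. -/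
/-!
Call a ring homomorphism `φ : R → S` *triple averaging* if, whenever `φ x = i + j + k` with units
`i, j, k` of `S`, any three weights on `Rˣ` admit units `a, b, c` above `i, j, k` with
`a + b + c = x` whose total weight is at least the sum of the means of the weights over the three
fibres. Such homomorphisms compose if they are surjective on units, so for odd `m` the map
`ℤ/m → ℤ/3` can be treated one prime `p` at a time, as a composite of maps `ℤ/pn → ℤ/n`:

* if `p ∣ n`, each fibre is a coset of the kernel; fix `b` of at least mean weight, and average over
  `a` with `c = x - b - a`, which runs over its whole fibre;
* if `p ∤ n`, so that `p ≥ 5`, each fibre maps injectively to `ℤ/p` with `p - 1` elements. List the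
  three fibres by decreasing weight. Averaging along permutations `σ, τ` with
  `i + σ i + τ i ≥ p - 1` gives positions `(i, σ i, τ i)` of at least mean total weight, and by
  Cauchy–Davenport the initial segments up to these positions sum to all of `ℤ/p`.

Finally, the two inequalities on `α₁` and `α₂` say exactly what is needed to write every residue
mod `3` as a sum of three units `i, j, k` with `αᵢ + αⱼ + αₖ` above the threshold.
-/

open Finset Function
open scoped BigOperators Pointwise

section Expect

variable {ι κ M : Type*} [AddCommMonoid M] [Module ℚ≥0 M]

lemma expect_eq_expect_expect_fiber [DecidableEq κ] {s : Finset ι} {t : Finset κ} {g : ι → κ}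
    (hg : ∀ i ∈ s, g i ∈ t) {n : ℕ} (hn : ∀ j ∈ t, #{i ∈ s | g i = j} = n) (f : ι → M) :
    𝔼 i ∈ s, f i = 𝔼 j ∈ t, 𝔼 i ∈ s with g i = j, f i := by
  have hcard : #s = #t * n := by
    rw [card_eq_sum_card_fiberwise hg, sum_congr rfl hn, sum_const, smul_eq_mul]
  have hinner : ∀ j ∈ t, 𝔼 i ∈ s with g i = j, f i = (n : ℚ≥0)⁻¹ • ∑ i ∈ s with g i = j, f i :=
    fun j hj => by rw [expect, hn j hj]
  rw [expect_congr rfl hinner, expect, expect, ← smul_sum, smul_smul,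
    sum_fiberwise_of_maps_to hg, hcard, Nat.cast_mul, mul_inv]

lemma exists_equiv_antitone_comp {α : Type*} [LinearOrder α] {s : Finset ι} {n : ℕ}
    (hs : #s = n) (f : ι → α) : ∃ e : Fin n ≃ s, Antitone fun i => f (e i) := by
  let e₀ : Fin n ≃ s := (s.equivFinOfCardEq hs).symm
  let key : Fin n → αᵒᵈ := fun i => OrderDual.toDual (f (e₀ i))
  exact ⟨(Tuple.sort key).trans e₀, Tuple.monotone_sort key⟩

lemma expect_comp_equiv {s : Finset ι} [Fintype κ] (e : κ ≃ s) (f : ι → M) :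
    𝔼 i, f (e i) = 𝔼 a ∈ s, f a :=
  expect_bij (fun i _ => e i) (fun i _ => (e i).2) (fun _ _ => rfl)
    (fun _ _ _ _ h => e.injective (Subtype.ext h))
    fun a ha => ⟨e.symm ⟨a, ha⟩, mem_univ _, by rw [e.apply_symm_apply]⟩

end Expect

section CauchyDavenport

lemma exists_perm_le_add_add {n : ℕ} (hn : 3 ≤ n) :
    ∃ σ τ : Equiv.Perm (Fin n), ∀ i : Fin n, n ≤ (i : ℕ) + σ i + τ i := by
  -- `σ` rotates by half a turn; `τ` steps down through the odd, then the even positions, so that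
  -- `i + σ i + τ i` is constant on each of the two halves.
  let σ : Fin n → Fin n := fun i =>
    if hi : (i : ℕ) < n / 2 then ⟨i + (n + 1) / 2, by omega⟩ else ⟨i - n / 2, by omega⟩
  let τ : Fin n → Fin n := fun i =>
    if hi : (i : ℕ) < n / 2 then ⟨2 * (n / 2) - 1 - 2 * i, by omega⟩
    else ⟨2 * (n - 1 - i), by omega⟩
  have hσ : Injective σ := by
    intro i j hij
    simp only [σ] at hij
    ext
    split_ifs at hij <;> simp only [Fin.mk.injEq] at hij <;> omega
  have hτ : Injective τ := by
    intro i j hij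
    simp only [τ] at hij
    ext
    split_ifs at hij <;> simp only [Fin.mk.injEq] at hij <;> omega
  refine ⟨Equiv.ofBijective σ (Finite.injective_iff_bijective.1 hσ),
    Equiv.ofBijective τ (Finite.injective_iff_bijective.1 hτ), fun i => ?_⟩
  simp only [Equiv.ofBijective_apply, σ, τ]
  split_ifs <;> simp only <;> omega

variable {p : ℕ} [Fact p.Prime]

lemma add_add_eq_univ_of_le_card {A B C : Finset (ZMod p)} (hA : A.Nonempty) (hB : B.Nonempty)
    (hC : C.Nonempty) (hcard : p + 2 ≤ #A + #B + #C) : A + B + C = univ := by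
  have hp : p.Prime := Fact.out
  have hAB := ZMod.cauchy_davenport hp hA hB
  have hABC := ZMod.cauchy_davenport hp (hA.add hB) hC
  have := hC.card_pos
  refine eq_univ_of_card _ (le_antisymm (card_le_univ _) ?_)
  rw [ZMod.card]
  omega

lemma exists_le_add_add_eq {n : ℕ} {u v w : Fin n → ZMod p} (hu : Injective u)
    (hv : Injective v) (hw : Injective w) {i j k : Fin n} (hp : p ≤ (i : ℕ) + j + k + 1)
    (x : ZMod p) : ∃ i' ≤ i, ∃ j' ≤ j, ∃ k' ≤ k, u i' + v j' + w k' = x := by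
  have hx : x ∈ (Iic i).image u + (Iic j).image v + (Iic k).image w := by
    rw [add_add_eq_univ_of_le_card (nonempty_Iic.image u) (nonempty_Iic.image v)
      (nonempty_Iic.image w)]
    · exact mem_univ x
    · simp only [card_image_of_injective _ hu, card_image_of_injective _ hv,
        card_image_of_injective _ hw, Fin.card_Iic]
      omega
  obtain ⟨_, huv, _, hw', hx⟩ := mem_add.1 hx
  obtain ⟨_, hu', _, hv', rfl⟩ := mem_add.1 huv
  obtain ⟨i', hi', rfl⟩ := mem_image.1 hu'
  obtain ⟨j', hj', rfl⟩ := mem_image.1 hv'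
  obtain ⟨k', hk', rfl⟩ := mem_image.1 hw'
  exact ⟨i', mem_Iic.1 hi', j', mem_Iic.1 hj', k', mem_Iic.1 hk', hx⟩

lemma exists_add_add_eq_and_expect_le {ι : Type*} {n : ℕ} (hn : 3 ≤ n) (hp : p ≤ n + 1)
    {A B C : Finset ι} (hA : #A = n) (hB : #B = n) (hC : #C = n) {π : ι → ZMod p}
    (hπA : Set.InjOn π A) (hπB : Set.InjOn π B) (hπC : Set.InjOn π C) (f g h : ι → ℝ)
    (x : ZMod p) :
    ∃ a ∈ A, ∃ b ∈ B, ∃ c ∈ C, π a + π b + π c = x ∧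
      𝔼 a ∈ A, f a + 𝔼 b ∈ B, g b + 𝔼 c ∈ C, h c ≤ f a + g b + h c := by
  have : NeZero n := ⟨by omega⟩
  obtain ⟨eA, hf⟩ := exists_equiv_antitone_comp hA f
  obtain ⟨eB, hg⟩ := exists_equiv_antitone_comp hB g
  obtain ⟨eC, hh⟩ := exists_equiv_antitone_comp hC h
  obtain ⟨σ, τ, hστ⟩ := exists_perm_le_add_add hn
  obtain ⟨i, -, hi⟩ : ∃ i ∈ univ, 𝔼 a ∈ A, f a + 𝔼 b ∈ B, g b + 𝔼 c ∈ C, h c ≤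
      f (eA i) + g (eB (σ i)) + h (eC (τ i)) := by
    refine exists_le_of_le_expect univ_nonempty (le_of_eq ?_)
    rw [expect_add_distrib, expect_add_distrib, expect_comp_equiv eA f,
      ← expect_comp_equiv (σ.trans eB) g, ← expect_comp_equiv (τ.trans eC) h]
    rfl
  obtain ⟨i', hi', j', hj', k', hk', hx⟩ := exists_le_add_add_eq (hπA.injective.comp eA.injective)
    (hπB.injective.comp eB.injective) (hπC.injective.comp eC.injective)
    (hp.trans (Nat.succ_le_succ (hστ i))) x
  exact ⟨eA i', (eA i').2, eB j', (eB j').2, eC k', (eC k').2, hx,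
    hi.trans (add_le_add_three (hf hi') (hg hj') (hh hk'))⟩

end CauchyDavenport

section TripleAveraging

variable {R S T : Type*} [Semiring R] [Semiring S] [Semiring T] [Fintype Rˣ] [DecidableEq S]
  [DecidableEq T]

/-- The units of `R` lying above the unit `i` of `S` under a ring homomorphism `φ : R →+* S`. -/
def unitFiber (φ : R →+* S) (i : Sˣ) : Finset Rˣ := {a | φ a = i}

/-- The averaging property of a ring homomorphism by which representations of elements of `S` as
sums of three units are lifted to `R`. Three independent weights are allowed, and the weights are
compared with their means over the fibres, so that the property is stable under composition. -/
def IsTripleAveraging (φ : R →+* S) : Prop :=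
  ∀ (f g h : Rˣ → ℝ) (i j k : Sˣ) (x : R), φ x = i + j + k →
    ∃ a ∈ unitFiber φ i, ∃ b ∈ unitFiber φ j, ∃ c ∈ unitFiber φ k, (a + b + c : R) = x ∧
      𝔼 a ∈ unitFiber φ i, f a + 𝔼 b ∈ unitFiber φ j, g b + 𝔼 c ∈ unitFiber φ k, h c ≤
        f a + g b + h c

lemma mem_unitFiber {φ : R →+* S} {i : Sˣ} {a : Rˣ} : a ∈ unitFiber φ i ↔ φ a = i := by
  simp [unitFiber]

lemma unitFiber_eq_filter_map (φ : R →+* S) (i : Sˣ) :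
    unitFiber φ i = ({a | Units.map (φ : R →* S) a = i} : Finset Rˣ) := by
  ext a; simp [mem_unitFiber, Units.ext_iff]

lemma unitFiber_nonempty {φ : R →+* S} (hφ : Surjective (Units.map (φ : R →* S))) (i : Sˣ) :
    (unitFiber φ i).Nonempty :=
  (hφ i).imp fun _ ha => mem_unitFiber.2 (congrArg Units.val ha)

lemma card_unitFiber_eq {φ : R →+* S} (hφ : Surjective (Units.map (φ : R →* S))) (i j : Sˣ) :
    #(unitFiber φ i) = #(unitFiber φ j) := by
  rw [unitFiber_eq_filter_map, unitFiber_eq_filter_map,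
    MonoidHom.card_fiber_eq_of_mem_range _ (hφ i) (hφ j)]

lemma card_mul_card_unitFiber [Fintype Sˣ] {φ : R →+* S}
    (hφ : Surjective (Units.map (φ : R →* S))) (i : Sˣ) :
    Fintype.card Sˣ * #(unitFiber φ i) = Fintype.card Rˣ := by
  calc Fintype.card Sˣ * #(unitFiber φ i) = ∑ j, #(unitFiber φ j) := by
        rw [sum_congr rfl fun j _ => card_unitFiber_eq hφ j i, sum_const, card_univ, smul_eq_mul]
    _ = Fintype.card Rˣ := by
        simp only [unitFiber_eq_filter_map]
        exact (card_eq_sum_card_fiberwise fun a _ => mem_univ _).symm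

lemma expect_unitFiber_comp [Fintype Sˣ] {φ : R →+* S} (ψ : S →+* T)
    (hφ : Surjective (Units.map (φ : R →* S))) (f : Rˣ → ℝ) (k : Tˣ) :
    𝔼 a ∈ unitFiber (ψ.comp φ) k, f a = 𝔼 b ∈ unitFiber ψ k, 𝔼 a ∈ unitFiber φ b, f a := by
  have hfiber : ∀ b ∈ unitFiber ψ k,
      {a ∈ unitFiber (ψ.comp φ) k | Units.map (φ : R →* S) a = b} = unitFiber φ b := by
    intro b hb
    ext a
    simp only [unitFiber_eq_filter_map φ, mem_filter, mem_univ, true_and, and_iff_right_iff_imp]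
    intro ha
    rw [mem_unitFiber, ← mem_unitFiber.1 hb, ← ha]
    rfl
  rw [expect_eq_expect_expect_fiber (g := Units.map (φ : R →* S)) (n := #(unitFiber φ 1))
    (fun a ha => mem_unitFiber.2 (mem_unitFiber (φ := ψ.comp φ).1 ha))
    (fun b hb => by rw [hfiber b hb, card_unitFiber_eq hφ])]
  exact expect_congr rfl fun b hb => by rw [hfiber b hb]

namespace IsTripleAveraging

protected lemma id [DecidableEq R] : IsTripleAveraging (RingHom.id R) := by
  have hfiber (i : Rˣ) : unitFiber (RingHom.id R) i = {i} := by
    ext a; simp [mem_unitFiber, Units.ext_iff]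
  intro f g h i j k x hx
  simpa [hfiber] using hx.symm

protected lemma comp [Fintype Sˣ] {ψ : S →+* T} {φ : R →+* S} (hψ : IsTripleAveraging ψ)
    (hφ : IsTripleAveraging φ) (hsurj : Surjective (Units.map (φ : R →* S))) :
    IsTripleAveraging (ψ.comp φ) := by
  intro f g h i j k x hx
  simp only [expect_unitFiber_comp ψ hsurj]
  obtain ⟨a', ha', b', hb', c', hc', hx', hle'⟩ := hψ (fun a' => 𝔼 a ∈ unitFiber φ a', f a)
    (fun b' => 𝔼 b ∈ unitFiber φ b', g b) (fun c' => 𝔼 c ∈ unitFiber φ c', h c) i j k (φ x) hx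
  obtain ⟨a, ha, b, hb, c, hc, hx, hle⟩ := hφ f g h a' b' c' x hx'.symm
  have lift {d : Rˣ} {d' : Sˣ} {l : Tˣ} (hd : d ∈ unitFiber φ d') (hd' : d' ∈ unitFiber ψ l) :
      d ∈ unitFiber (ψ.comp φ) l := by
    rw [mem_unitFiber, RingHom.comp_apply, mem_unitFiber.1 hd, mem_unitFiber.1 hd']
  exact ⟨a, lift ha ha', b, lift hb hb', c, lift hc hc', hx, hle'.trans hle⟩

lemma of_isLocalHom {R S : Type*} [Ring R] [Ring S] [Fintype Rˣ] [DecidableEq S] {φ : R →+* S}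
    [IsLocalHom φ] (hsurj : Surjective (Units.map (φ : R →* S))) : IsTripleAveraging φ := by
  intro f g h i j k x hx
  obtain ⟨b, hb, hgb⟩ := exists_le_of_le_expect (unitFiber_nonempty hsurj j)
    (le_refl (𝔼 b ∈ unitFiber φ j, g b))
  -- Subtraction from `x - b` interchanges the fibres above `i` and `k`.
  have complement {l l' : Sˣ} (hl : (l + l' : S) = i + k) {a : Rˣ} (ha : a ∈ unitFiber φ l) :
      ∃ c ∈ unitFiber φ l', (a + b + c : R) = x := by
    have hφ : φ (x - b - a) = l' := by
      rw [map_sub, map_sub, hx, mem_unitFiber.1 hb, mem_unitFiber.1 ha, add_right_comm, ← hl]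
      abel
    obtain ⟨c, hc⟩ : IsUnit (x - b - a) := isUnit_of_map_unit φ _ (hφ ▸ l'.isUnit)
    exact ⟨c, mem_unitFiber.2 (hc ▸ hφ), by rw [hc]; abel⟩
  choose! c hc hsum using fun a (ha : a ∈ unitFiber φ i) => complement rfl ha
  have hmean : 𝔼 a ∈ unitFiber φ i, h (c a) = 𝔼 c ∈ unitFiber φ k, h c := by
    refine expect_nbij c hc (fun _ _ => rfl) (fun a ha a' ha' haa' => ?_) fun d hd => ?_
    · have := (hsum a ha).trans (hsum a' ha').symm
      rw [haa'] at this
      exact Units.ext (add_right_cancel (add_right_cancel this))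
    · obtain ⟨a, ha, had⟩ := complement (add_comm _ _) hd
      refine ⟨a, ha, Units.ext (add_left_cancel ((hsum a ha).trans (had.symm.trans ?_)))⟩
      abel
  obtain ⟨a, ha, hle⟩ := exists_le_of_le_expect (unitFiber_nonempty hsurj i)
    (expect_add_distrib (unitFiber φ i) f fun a => h (c a)).ge
  exact ⟨a, ha, b, hb, c a, hc a ha, hsum a ha, by linarith⟩

lemma of_injective_prod {p : ℕ} [Fact p.Prime] {π : R →+* ZMod p} {φ : R →+* S} (hp : 5 ≤ p)
    (hinj : Injective (π.prod φ)) (hcard : ∀ i, #(unitFiber φ i) = p - 1) :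
    IsTripleAveraging φ := by
  intro f g h i j k x hx
  have hinjOn (i : Sˣ) : Set.InjOn (fun a : Rˣ => π a) (unitFiber φ i) := by
    intro a ha b hb hab
    exact Units.ext (hinj (Prod.ext hab ((mem_unitFiber.1 ha).trans (mem_unitFiber.1 hb).symm)))
  obtain ⟨a, ha, b, hb, c, hc, hπ, hle⟩ := exists_add_add_eq_and_expect_le (by omega) (by omega)
    (hcard i) (hcard j) (hcard k) (hinjOn i) (hinjOn j) (hinjOn k) f g h (π x)
  refine ⟨a, ha, b, hb, c, hc, hinj (Prod.ext ?_ ?_), hle⟩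
  · simpa using hπ
  · simp [hx, mem_unitFiber.1 ha, mem_unitFiber.1 hb, mem_unitFiber.1 hc]

end IsTripleAveraging

end TripleAveraging

section ZMod

variable {p n : ℕ}

lemma isLocalHom_castHom_mul_of_dvd (hp : p ∣ n) :
    IsLocalHom (ZMod.castHom (Nat.dvd_mul_left n p) (ZMod n)) := by
  refine ⟨fun y hy => ?_⟩
  obtain ⟨z, rfl⟩ := ZMod.intCast_surjective y
  rw [map_intCast, ZMod.coe_int_isUnit_iff_isCoprime] at hy
  rw [ZMod.coe_int_isUnit_iff_isCoprime, Nat.cast_mul]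
  exact (hy.of_isCoprime_of_dvd_left (Int.natCast_dvd_natCast.2 hp)).mul_left hy

lemma injective_castHom_prod_castHom (hpn : p.Coprime n) :
    Injective ((ZMod.castHom (Nat.dvd_mul_right p n) (ZMod p)).prod
      (ZMod.castHom (Nat.dvd_mul_left n p) (ZMod n))) := by
  have : (ZMod.castHom (Nat.dvd_mul_right p n) (ZMod p)).prod
      (ZMod.castHom (Nat.dvd_mul_left n p) (ZMod n)) = ZMod.chineseRemainder hpn :=
    Subsingleton.elim _ _
  rw [this]
  exact (ZMod.chineseRemainder hpn).injective

lemma card_unitFiber_castHom_of_coprime [NeZero n] [Fact p.Prime] (hpn : p.Coprime n)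
    (i : (ZMod n)ˣ) :
    #(unitFiber (ZMod.castHom (Nat.dvd_mul_left n p) (ZMod n)) i) = p - 1 := by
  have h := card_mul_card_unitFiber (ZMod.unitsMap_surjective (Nat.dvd_mul_left n p)) i
  rw [ZMod.card_units_eq_totient, ZMod.card_units_eq_totient, Nat.totient_mul hpn,
    Nat.totient_prime (p := p) Fact.out, mul_comm] at h
  exact Nat.eq_of_mul_eq_mul_right (Nat.totient_pos.2 (NeZero.pos n)) h

lemma isTripleAveraging_castHom_prime_mul [NeZero n] [Fact p.Prime] (hp : p ∣ n ∨ 5 ≤ p) :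
    IsTripleAveraging (ZMod.castHom (Nat.dvd_mul_left n p) (ZMod n)) := by
  by_cases hpn : p ∣ n
  · have := isLocalHom_castHom_mul_of_dvd hpn
    exact .of_isLocalHom (ZMod.unitsMap_surjective _)
  · have hcop : p.Coprime n := (Nat.Prime.coprime_iff_not_dvd Fact.out).2 hpn
    exact .of_injective_prod (hp.resolve_left hpn) (injective_castHom_prod_castHom hcop)
      (card_unitFiber_castHom_of_coprime hcop)

lemma isTripleAveraging_castHom {d m : ℕ} [NeZero m] (hodd : Odd m) (hdm : d ∣ m)
    (h3 : 3 ∣ m → 3 ∣ d) : IsTripleAveraging (ZMod.castHom hdm (ZMod d)) := by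
  obtain ⟨t, ht⟩ := id hdm
  induction t using induction_on_primes generalizing m with
  | zero => exact absurd ht (by simpa using NeZero.ne m)
  | one =>
    obtain rfl : m = d := by rw [ht, mul_one]
    rw [ZMod.castHom_self]
    exact .id
  | prime_mul p t hp ih =>
    obtain rfl : m = p * (d * t) := by rw [ht, mul_left_comm]
    have : Fact p.Prime := ⟨hp⟩
    have : NeZero (d * t) := ⟨right_ne_zero_of_mul (NeZero.ne (p * (d * t)))⟩
    have hquot : IsTripleAveraging (ZMod.castHom (Nat.dvd_mul_right d t) (ZMod d)) :=
      ih (Nat.Odd.of_mul_right hodd) _ (fun h => h3 (h.mul_left p)) rfl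
    have hstep : p ∣ d * t ∨ 5 ≤ p := by
      by_cases hp3 : p = 3
      · subst hp3
        exact .inl ((h3 (Nat.dvd_mul_right 3 _)).mul_right t)
      · have hp2 : p ≠ 2 := hodd.ne_two_of_dvd_nat (Nat.dvd_mul_right p _)
        exact .inr (hp.five_le_of_ne_two_of_ne_three hp2 hp3)
    rw [← ZMod.castHom_comp (Nat.dvd_mul_right d t) (Nat.dvd_mul_left (d * t) p)]
    exact hquot.comp (isTripleAveraging_castHom_prime_mul hstep) (ZMod.unitsMap_surjective _)

lemma exists_units_zmod_three_lt_add_add {α : ZMod 3 → ℝ} {c : ℝ} (h1 : c < 2 * α 1 + α 2)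
    (h2 : c < 2 * α 2 + α 1) (y : ZMod 3) :
    ∃ i j k : (ZMod 3)ˣ, y = i + j + k ∧ c < α i + α j + α k := by
  have hneg : ((-1 : (ZMod 3)ˣ) : ZMod 3) = 2 := rfl
  obtain rfl | rfl | rfl : y = 0 ∨ y = 1 ∨ y = 2 := by revert y; decide
  · rcases le_total (α 1) (α 2) with h | h
    · exact ⟨-1, -1, -1, by decide, by rw [hneg]; linarith⟩
    · exact ⟨1, 1, 1, by decide, by rw [Units.val_one]; linarith⟩
  · exact ⟨1, 1, -1, by decide, by rw [hneg, Units.val_one]; linarith⟩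
  · exact ⟨-1, -1, 1, by decide, by rw [hneg, Units.val_one]; linarith⟩

end ZMod

theorem stmt6_general (m : ℕ) [NeZero m] (hodd : Odd m) (h3 : 3 ∣ m) (f : (ZMod m)ˣ → ℝ)
    (α : ZMod 3 → ℝ)
    (hα : ∀ i : ZMod 3,
      α i = 𝔼 r with ZMod.castHom h3 (ZMod 3) (Units.val r) = i, f r)
    (c : ℝ) (h1 : c < 2 * α 1 + α 2) (h2 : c < 2 * α 2 + α 1) (x : ZMod m) :
    ∃ a₁ a₂ a₃ : (ZMod m)ˣ, x = (a₁ : ZMod m) + (a₂ : ZMod m) + (a₃ : ZMod m) ∧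
      c < f a₁ + f a₂ + f a₃ := by
  obtain ⟨i, j, k, hx, hc⟩ :=
    exists_units_zmod_three_lt_add_add h1 h2 (ZMod.castHom h3 (ZMod 3) x)
  obtain ⟨a₁, -, a₂, -, a₃, -, hsum, hle⟩ :=
    isTripleAveraging_castHom hodd h3 (fun _ => dvd_rfl) f f f i j k x hx
  rw [hα, hα, hα] at hc
  exact ⟨a₁, a₂, a₃, hsum.symm, hc.trans_le hle⟩

/-- Proposition: let `m` be an odd squarefree positive integer divisible by `3` and
`f : (ℤ/mℤ)* → (0,1]`. For `i = 1, 2` let `αᵢ` be the average of `f` over units `r` with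
`r ≡ i (mod 3)`. If `2α₁ + α₂ > 3/2` and `2α₂ + α₁ > 3/2`, then every `x ∈ ℤ/mℤ` is
`a₁ + a₂ + a₃` with the `aᵢ` units and `f(a₁) + f(a₂) + f(a₃) > 3/2`. -/
theorem stmt6 (m : ℕ) [NeZero m] (hodd : Odd m) (hsf : Squarefree m) (h3 : 3 ∣ m)
    (f : (ZMod m)ˣ → ℝ) (hf : ∀ x, f x ∈ Set.Ioc (0 : ℝ) 1)
    (α : ZMod 3 → ℝ)
    (hα : ∀ i : ZMod 3,
      α i = (∑ r ∈ Finset.univ.filter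
              (fun r : (ZMod m)ˣ => ZMod.castHom h3 (ZMod 3) (r : ZMod m) = i), f r) /
            ((Finset.univ.filter
              (fun r : (ZMod m)ˣ => ZMod.castHom h3 (ZMod 3) (r : ZMod m) = i)).card : ℝ))
    (h1 : 2 * α 1 + α 2 > 3 / 2) (h2 : 2 * α 2 + α 1 > 3 / 2) :
    ∀ x : ZMod m, ∃ a₁ a₂ a₃ : (ZMod m)ˣ,
      x = (a₁ : ZMod m) + (a₂ : ZMod m) + (a₃ : ZMod m) ∧
      f a₁ + f a₂ + f a₃ > 3 / 2 := by
  exact stmt6_general m hodd h3 f α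
    (fun i => (hα i).trans (expect_eq_sum_div_card _ _).symm) (3 / 2) h1 h2
end
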